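/- Let c : Ω → [0,∞] be 𝒜-measurable, P* ∈ ℙ, and K_1 = {P ∈ M : P ≪ P*}. Then K_1 is compact, and if K_1 ≠ ∅ there exists P ∈ K_1 such that P(c) = inf_{Q ∈ K_1} Q(c). -/

import Mathlib

open MeasureTheory Set ENNReal

namespace FATransport

variable {α : Type*} [MeasurableSpace α]

/-- The collection of measurable sets of `α` (the σ-field `𝒜`), as a type. -/
abbrev MSet (α : Type*) [MeasurableSpace α] := {A : Set α // MeasurableSet A}

/-- A finitely additive probability on the σ-field of `α`, viewed as an element
of `[0,1]^𝒜`: it maps the whole space to `1` and is additive on disjoint pairs. -/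
def IsFAP (P : MSet α → unitInterval) : Prop :=
  (P ⟨Set.univ, MeasurableSet.univ⟩ : ℝ) = 1 ∧
    ∀ A B : MSet α, Disjoint A.1 B.1 →
      (P ⟨A.1 ∪ B.1, A.2.union B.2⟩ : ℝ) = (P A : ℝ) + (P B : ℝ)

/-- `ℙ`, the set of all finitely additive probabilities on `𝒜`, as a subset of
`[0,1]^𝒜` (with its product topology). -/
def FAPs (α : Type*) [MeasurableSpace α] : Set (MSet α → unitInterval) :=
  {P | IsFAP P}

/-- Integral of a simple function with respect to a finitely additive set function. -/
noncomputable def simpleInt (P : MSet α → unitInterval) (s : SimpleFunc α ℝ) : ℝ :=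
  ∑ y ∈ s.range, y * (P ⟨(⇑s) ⁻¹' {y}, s.measurableSet_fiber y⟩ : ℝ)

/-- `P(f)` for a bounded measurable `f : α → ℝ`: the supremum of the integrals of
simple functions below `f` (for a f.a.p. `P` and bounded measurable `f` this agrees
with the integral defined by uniform approximation by simple functions). -/
noncomputable def fapInt (P : MSet α → unitInterval) (f : α → ℝ) : ℝ :=
  sSup (simpleInt P '' {s : SimpleFunc α ℝ | ∀ x, s x ≤ f x})

/-- `P(c) = sup_k P(c ∧ k)` for a `[0,∞]`-valued `c`. -/
noncomputable def fapIntTop (P : MSet α → unitInterval) (c : α → ℝ≥0∞) : ℝ≥0∞ :=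
  ⨆ k : ℕ, ENNReal.ofReal (fapInt P (fun x => (c x ⊓ (k : ℝ≥0∞)).toReal))

/-- A real-valued `f` is `P`-integrable iff `P(|f|) < ∞`. -/
def FapIntegrable (P : MSet α → unitInterval) (f : α → ℝ) : Prop :=
  fapIntTop P (fun x => ENNReal.ofReal |f x|) < ⊤

/-- `P(f) = P(f⁺) - P(f⁻)` for a (`P`-integrable) real-valued `f`. -/
noncomputable def fapIntR (P : MSet α → unitInterval) (f : α → ℝ) : ℝ :=
  (fapIntTop P (fun x => ENNReal.ofReal (f x))).toReal -
    (fapIntTop P (fun x => ENNReal.ofReal (-f x))).toReal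

/-- `P ≪ Q` for finitely additive probabilities. -/
def FapAC (P Q : MSet α → unitInterval) : Prop :=
  ∀ A : MSet α, (Q A : ℝ) = 0 → (P A : ℝ) = 0

variable {n : ℕ} {Ω : Fin n → Type*} [∀ i, MeasurableSpace (Ω i)]

/-- `M`, the set of finitely additive probabilities on `𝒜 = ⊗ᵢ 𝒜ᵢ` whose
`i`-th marginal is `μ i` for every `i`. -/
def couplings (μ : ∀ i, Measure (Ω i)) : Set (MSet (∀ i, Ω i) → unitInterval) :=
  {P | IsFAP P ∧ ∀ (i : Fin n) (B : Set (Ω i)) (hB : MeasurableSet B),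
    (P ⟨(fun ω => ω i) ⁻¹' B, (measurable_pi_apply i) hB⟩ : ℝ) = (μ i B).toReal}

end FATransport

/-!
`[0,1]^𝒜` is compact by Tychonoff's theorem, and finite additivity, the marginal conditions and the
vanishing on the null sets of `P*` are equations between finitely many evaluations `P ↦ P(A)`, so
they cut out closed sets. The integral of a simple function is a finite linear combination of
evaluations, hence continuous in `P`, and for `P ∈ ℙ` it is at most any upper bound of the function.
So the real suprema defining `P(c ∧ k)` are genuine ones on `ℙ`, and `P(c)` is lower semicontinuous
there as a supremum of continuous functions; it attains its infimum on nonempty compact sets.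
-/

namespace FATransport

section FinitelyAdditive

variable {α : Type*} [MeasurableSpace α] {P : MSet α → unitInterval}

theorem IsFAP.apply_empty (hP : IsFAP P) : (P ⟨∅, MeasurableSet.empty⟩ : ℝ) = 0 := by
  have h_double := hP.2 ⟨∅, MeasurableSet.empty⟩ ⟨∅, MeasurableSet.empty⟩ (disjoint_empty ∅)
  simpa only [union_self, left_eq_add] using h_double

theorem IsFAP.sum_apply_fiber {β : Type*} (hP : IsFAP P) (s : SimpleFunc α β) (t : Finset β) :
    ∑ y ∈ t, (P ⟨s ⁻¹' {y}, s.measurableSet_fiber y⟩ : ℝ) =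
      P ⟨s ⁻¹' (t : Set β), s.measurableSet_preimage _⟩ := by
  classical
  induction t using Finset.induction_on with
  | empty => simpa using hP.apply_empty.symm
  | insert a t ha ih =>
    have h_disjoint : Disjoint (s ⁻¹' {a}) (s ⁻¹' (t : Set β)) :=
      (disjoint_singleton_left.2 (Finset.mem_coe.not.2 ha)).preimage s
    rw [Finset.sum_insert ha, ih, ← hP.2 ⟨_, s.measurableSet_fiber a⟩
      ⟨_, s.measurableSet_preimage t⟩ h_disjoint]
    simp only [Finset.coe_insert, insert_eq, preimage_union]

theorem IsFAP.sum_range_apply_fiber {β : Type*} (hP : IsFAP P) (s : SimpleFunc α β) :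
    ∑ y ∈ s.range, (P ⟨s ⁻¹' {y}, s.measurableSet_fiber y⟩ : ℝ) = 1 := by
  rw [hP.sum_apply_fiber, ← hP.1]
  simp only [SimpleFunc.coe_range, preimage_range]

theorem IsFAP.simpleInt_le (hP : IsFAP P) {s : SimpleFunc α ℝ} {b : ℝ} (hs : ∀ x, s x ≤ b) :
    simpleInt P s ≤ b := by
  calc simpleInt P s
      ≤ ∑ y ∈ s.range, b * (P ⟨s ⁻¹' {y}, s.measurableSet_fiber y⟩ : ℝ) := by
        refine Finset.sum_le_sum fun y hy => ?_
        obtain ⟨x, rfl⟩ := SimpleFunc.mem_range.1 hy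
        exact mul_le_mul_of_nonneg_right (hs x) (P _).2.1
    _ = b := by rw [← Finset.mul_sum, hP.sum_range_apply_fiber, mul_one]

end FinitelyAdditive

section Topology

variable {α : Type*} [MeasurableSpace α]

theorem continuous_apply_coe (A : MSet α) :
    Continuous fun P : MSet α → unitInterval => (P A : ℝ) :=
  continuous_subtype_val.comp (continuous_apply A)

theorem continuous_simpleInt (s : SimpleFunc α ℝ) :
    Continuous fun P : MSet α → unitInterval => simpleInt P s :=
  continuous_finsetSum _ fun _ _ => continuous_const.mul (continuous_apply_coe _)

theorem lowerSemicontinuousOn_fapInt {f : α → ℝ} (hf : BddAbove (range f)) :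
    LowerSemicontinuousOn (fun P => fapInt P f) (FAPs α) := by
  obtain ⟨b, hb⟩ := hf
  simp only [fapInt, sSup_image']
  refine lowerSemicontinuousOn_ciSup (fun P hP => ⟨b, ?_⟩)
    fun s => (continuous_simpleInt s.1).lowerSemicontinuous.lowerSemicontinuousOn _
  rintro _ ⟨s, rfl⟩
  exact IsFAP.simpleInt_le hP fun x => (s.2 x).trans (hb (mem_range_self x))

theorem lowerSemicontinuousOn_fapIntTop (c : α → ℝ≥0∞) :
    LowerSemicontinuousOn (fun P => fapIntTop P c) (FAPs α) := by
  refine lowerSemicontinuousOn_iSup fun k => ?_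
  have h_bdd : BddAbove (range fun x => (c x ⊓ (k : ℝ≥0∞)).toReal) :=
    ⟨k, forall_mem_range.2 fun x => ENNReal.toReal_le_of_le_ofReal k.cast_nonneg
      (by simp only [ENNReal.ofReal_natCast, inf_le_right])⟩
  exact ENNReal.continuous_ofReal.comp_lowerSemicontinuousOn
    (lowerSemicontinuousOn_fapInt h_bdd) ENNReal.ofReal_mono

theorem exists_fapIntTop_eq_iInf {K : Set (MSet α → unitInterval)} (hK : IsCompact K)
    (hne : K.Nonempty) (hK_FAPs : K ⊆ FAPs α) (c : α → ℝ≥0∞) :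
    ∃ P ∈ K, fapIntTop P c = ⨅ Q ∈ K, fapIntTop Q c := by
  obtain ⟨P, hP, hP_min⟩ :=
    ((lowerSemicontinuousOn_fapIntTop c).mono hK_FAPs).exists_isMinOn hne hK
  exact ⟨P, hP, le_antisymm (le_iInf₂ hP_min) (iInf₂_le P hP)⟩

theorem isClosed_FAPs : IsClosed (FAPs α) := by
  simp only [FAPs, IsFAP, ofPred_and, ofPred_forall]
  refine (isClosed_eq (continuous_apply_coe _) continuous_const).inter ?_
  exact isClosed_iInter fun A => isClosed_iInter fun B => isClosed_iInter fun _ =>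
    isClosed_eq (continuous_apply_coe _) ((continuous_apply_coe A).add (continuous_apply_coe B))

theorem isClosed_setOf_fapAC (Q : MSet α → unitInterval) : IsClosed {P | FapAC P Q} := by
  simp only [FapAC, ofPred_forall]
  exact isClosed_iInter fun A => isClosed_iInter fun _ =>
    isClosed_eq (continuous_apply_coe A) continuous_const

end Topology

section Couplings

variable {n : ℕ} {Ω : Fin n → Type*} [∀ i, MeasurableSpace (Ω i)]

theorem couplings_subset_FAPs (μ : ∀ i, Measure (Ω i)) : couplings μ ⊆ FAPs (∀ i, Ω i) :=
  fun _ hP => hP.1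

theorem isClosed_couplings (μ : ∀ i, Measure (Ω i)) : IsClosed (couplings μ) := by
  simp only [couplings, ofPred_and, ofPred_forall]
  refine isClosed_FAPs.inter ?_
  exact isClosed_iInter fun i => isClosed_iInter fun B => isClosed_iInter fun hB =>
    isClosed_eq (continuous_apply_coe _) continuous_const

theorem K1_compact_and_min_general (μ : ∀ i, Measure (Ω i)) (c : (∀ i, Ω i) → ℝ≥0∞)
    (Q₀ : MSet (∀ i, Ω i) → unitInterval) :
    IsCompact {P ∈ couplings μ | FapAC P Q₀} ∧
      ({P ∈ couplings μ | FapAC P Q₀}.Nonempty →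
        ∃ P ∈ {P ∈ couplings μ | FapAC P Q₀},
          fapIntTop P c = ⨅ Q ∈ {P ∈ couplings μ | FapAC P Q₀}, fapIntTop Q c) := by
  have h_compact : IsCompact {P ∈ couplings μ | FapAC P Q₀} :=
    ((isClosed_couplings μ).inter (isClosed_setOf_fapAC Q₀)).isCompact
  have h_FAPs : {P ∈ couplings μ | FapAC P Q₀} ⊆ FAPs (∀ i, Ω i) :=
    (sep_subset _ _).trans (couplings_subset_FAPs μ)
  exact ⟨h_compact, fun hne => exists_fapIntTop_eq_iInf h_compact hne h_FAPs c⟩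

end Couplings

/-- for `P* ∈ ℙ`, the set `K₁ = {P ∈ M : P ≪ P*}` is compact; and if
`K₁ ≠ ∅` there is `P ∈ K₁` with `P(c) = inf_{Q ∈ K₁} Q(c)`. -/
theorem K1_compact_and_min
    {n : ℕ} (hn : 0 < n) {Ω : Fin n → Type*} [∀ i, MeasurableSpace (Ω i)]
    (μ : ∀ i, Measure (Ω i)) [∀ i, IsProbabilityMeasure (μ i)]
    (c : (∀ i, Ω i) → ℝ≥0∞) (hc : Measurable c)
    (Pstar : MSet (∀ i, Ω i) → unitInterval) (hPstar : IsFAP Pstar) :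
    IsCompact {P ∈ couplings μ | FapAC P Pstar} ∧
      (({P ∈ couplings μ | FapAC P Pstar}).Nonempty →
        ∃ P ∈ {P ∈ couplings μ | FapAC P Pstar},
          fapIntTop P c = ⨅ Q ∈ {P ∈ couplings μ | FapAC P Pstar}, fapIntTop Q c) := by
  exact K1_compact_and_min_general μ c Pstar

end FATransport
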